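/- arXiv:2110.01569 — 3 statements merged into one kernel-verified Lean document; each statement's English description precedes it below -/
import Mathlib

section
/- Let T be the bounded diagonal operator on ℓ²(ℕ, ℂ) defined by T e_n = (1/(n+1)) e_n for the standard orthonormal basis (e_n)_{n ∈ ℕ}. Then the principal two-sided ideal (T) of B(ℓ²) generated by T is not soft-edged: (T) ≠ (T)·K(ℓ²). -/
/-- The Hilbert space `ℓ²(ℕ, ℂ)` of square-summable complex sequences. -/
noncomputable abbrev ellTwo : Type := lp (fun _ : ℕ => ℂ) 2

/-- The standard orthonormal basis `(e_n)` of `ℓ²(ℕ, ℂ)`. -/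
noncomputable def stdBasis (n : ℕ) : ellTwo := lp.single 2 n 1

/-- The two-sided ideal of compact operators on `ℓ²`. -/
noncomputable def compactIdeal : TwoSidedIdeal (ellTwo →L[ℂ] ellTwo) :=
  TwoSidedIdeal.mk' {T : ellTwo →L[ℂ] ellTwo | IsCompactOperator (T : ellTwo → ellTwo)}
    isCompactOperator_zero
    (fun hx hy => hx.add hy)
    (fun hx => hx.neg)
    (fun {x y} hy => by simpa [Function.comp] using hy.clm_comp x)
    (fun {x y} hx => by simpa [Function.comp] using hx.comp_clm y)

/-- The product `I·J` of two two-sided ideals: the two-sided ideal whose elements are the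
finite sums of products `XY` with `X ∈ I` and `Y ∈ J`. -/
noncomputable def idealMul {R : Type*} [Ring R] (I J : TwoSidedIdeal R) : TwoSidedIdeal R :=
  TwoSidedIdeal.span {x : R | ∃ a ∈ I, ∃ b ∈ J, x = a * b}

/-- `X` is within `c` of an operator of rank at most `k`. -/
def Appr (X : ellTwo →L[ℂ] ellTwo) (k : ℕ) (c : ℝ) : Prop :=
  ∃ F : ellTwo →L[ℂ] ellTwo,
    LinearMap.rank (F : ellTwo →ₗ[ℂ] ellTwo) ≤ (k : Cardinal) ∧ ‖X - F‖ ≤ c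

theorem appr_zero (k : ℕ) (c : ℝ) (hc : 0 ≤ c) : Appr 0 k c := by
  refine ⟨0, ?_, by simpa using hc⟩
  rw [ContinuousLinearMap.toLinearMap_zero, LinearMap.rank_zero]
  exact zero_le

theorem Appr.add {X Y : ellTwo →L[ℂ] ellTwo} {k l : ℕ} {c d : ℝ}
    (hX : Appr X k c) (hY : Appr Y l d) : Appr (X + Y) (k + l) (c + d) := by
  obtain ⟨F, hF, hF'⟩ := hX
  obtain ⟨G, hG, hG'⟩ := hY
  refine ⟨F + G, ?_, ?_⟩
  · rw [ContinuousLinearMap.toLinearMap_add]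
    refine (LinearMap.rank_add_le _ _).trans ?_
    push_cast
    exact add_le_add hF hG
  · rw [add_sub_add_comm]
    exact (norm_add_le _ _).trans (add_le_add hF' hG')

theorem Appr.mul_left {X : ellTwo →L[ℂ] ellTwo} {k : ℕ} {c : ℝ}
    (A : ellTwo →L[ℂ] ellTwo) (hX : Appr X k c) : Appr (A * X) k (‖A‖ * c) := by
  obtain ⟨F, hF, hF'⟩ := hX
  refine ⟨A * F, ?_, ?_⟩
  · exact (LinearMap.rank_comp_le_right (F : ellTwo →ₗ[ℂ] ellTwo)
      (A : ellTwo →ₗ[ℂ] ellTwo)).trans hF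
  · rw [← mul_sub]
    exact (norm_mul_le _ _).trans (by gcongr)

theorem Appr.mul_right {X : ellTwo →L[ℂ] ellTwo} {k : ℕ} {c : ℝ}
    (A : ellTwo →L[ℂ] ellTwo) (hX : Appr X k c) : Appr (X * A) k (c * ‖A‖) := by
  obtain ⟨F, hF, hF'⟩ := hX
  refine ⟨F * A, ?_, ?_⟩
  · exact (LinearMap.rank_comp_le_left (A : ellTwo →ₗ[ℂ] ellTwo)
      (F : ellTwo →ₗ[ℂ] ellTwo)).trans hF
  · rw [← sub_mul]
    exact (norm_mul_le _ _).trans (by gcongr)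

theorem Appr.mono {X : ellTwo →L[ℂ] ellTwo} {k l : ℕ} {c d : ℝ}
    (hX : Appr X k c) (hkl : k ≤ l) (hcd : c ≤ d) : Appr X l d := by
  obtain ⟨F, hF, hF'⟩ := hX
  exact ⟨F, hF.trans (by exact_mod_cast hkl), hF'.trans hcd⟩

theorem Appr.mul {X Y : ellTwo →L[ℂ] ellTwo} {k l : ℕ} {c d : ℝ} (hc : 0 ≤ c)
    (hX : Appr X k c) (hY : Appr Y l d) : Appr (X * Y) (k + l) (c * d) := by
  obtain ⟨F, hF, hF'⟩ := hX
  obtain ⟨G, hG, hG'⟩ := hY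
  refine ⟨F * Y + (X - F) * G, ?_, ?_⟩
  · rw [ContinuousLinearMap.toLinearMap_add]
    refine (LinearMap.rank_add_le _ _).trans ?_
    push_cast
    refine add_le_add ?_ ?_
    · exact (LinearMap.rank_comp_le_left (Y : ellTwo →ₗ[ℂ] ellTwo)
        (F : ellTwo →ₗ[ℂ] ellTwo)).trans hF
    · exact (LinearMap.rank_comp_le_right (G : ellTwo →ₗ[ℂ] ellTwo)
        ((X - F : ellTwo →L[ℂ] ellTwo) : ellTwo →ₗ[ℂ] ellTwo)).trans hG
  · have : X * Y - (F * Y + (X - F) * G) = (X - F) * (Y - G) := by noncomm_ring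
    rw [this]
    exact (norm_mul_le _ _).trans (by gcongr)

/-- Operators with approximation numbers `O(1/n)`. -/
noncomputable def bigO : TwoSidedIdeal (ellTwo →L[ℂ] ellTwo) :=
  TwoSidedIdeal.mk' {X | ∃ C : ℝ, 0 ≤ C ∧ ∃ m : ℕ, ∀ n : ℕ, Appr X (m * n) (C / (n + 1))}
    ⟨0, le_rfl, 0, fun n => appr_zero _ _ (by simp)⟩
    (by
      rintro X Y ⟨C, hC, m, h⟩ ⟨D, hD, l, h'⟩
      refine ⟨C + D, by positivity, m + l, fun n => ((h n).add (h' n)).mono (by rw [add_mul]) ?_⟩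
      rw [add_div])
    (by
      rintro X ⟨C, hC, m, h⟩
      refine ⟨‖(-1 : ellTwo →L[ℂ] ellTwo)‖ * C, by positivity, m, fun n => ?_⟩
      have := (h n).mul_left (-1)
      rw [neg_one_mul] at this
      exact this.mono le_rfl (by rw [mul_div_assoc]))
    (by
      rintro A X ⟨C, hC, m, h⟩
      refine ⟨‖A‖ * C, by positivity, m, fun n => ?_⟩
      exact ((h n).mul_left A).mono le_rfl (by rw [mul_div_assoc]))
    (by
      rintro X A ⟨C, hC, m, h⟩
      refine ⟨C * ‖A‖, by positivity, m, fun n => ?_⟩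
      exact ((h n).mul_right A).mono le_rfl (by rw [div_mul_eq_mul_div]))

/-- Scaling helper for the little-o ideal. -/
theorem eps_aux (a ε : ℝ) (ha : 0 ≤ a) (hε : 0 < ε) (n : ℕ) :
    a * (ε / (a + 1) / ((n : ℝ) + 1)) ≤ ε / (n + 1) := by
  rw [← mul_div_assoc]
  gcongr
  rw [mul_div_assoc', div_le_iff₀ (by positivity)]
  nlinarith

/-- Operators with approximation numbers `o(1/n)`. -/
noncomputable def litO : TwoSidedIdeal (ellTwo →L[ℂ] ellTwo) :=
  TwoSidedIdeal.mk' {X | ∃ m : ℕ, ∀ ε : ℝ, 0 < ε → ∃ N : ℕ, ∀ n : ℕ, N ≤ n →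
      Appr X (m * n) (ε / (n + 1))}
    ⟨0, fun ε hε => ⟨0, fun n _ => appr_zero _ _ (by positivity)⟩⟩
    (by
      rintro X Y ⟨m, h⟩ ⟨l, h'⟩
      refine ⟨m + l, fun ε hε => ?_⟩
      obtain ⟨N, hN⟩ := h (ε / 2) (by positivity)
      obtain ⟨M, hM⟩ := h' (ε / 2) (by positivity)
      refine ⟨max N M, fun n hn => ((hN n (le_of_max_le_left hn)).add
        (hM n (le_of_max_le_right hn))).mono (by rw [add_mul]) ?_⟩
      rw [← add_div, add_halves])
    (by
      rintro X ⟨m, h⟩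
      refine ⟨m, fun ε hε => ?_⟩
      obtain ⟨N, hN⟩ := h (ε / (‖(-1 : ellTwo →L[ℂ] ellTwo)‖ + 1)) (by positivity)
      refine ⟨N, fun n hn => ?_⟩
      have := (hN n hn).mul_left (-1)
      rw [neg_one_mul] at this
      exact this.mono le_rfl (eps_aux _ _ (norm_nonneg _) hε n))
    (by
      rintro A X ⟨m, h⟩
      refine ⟨m, fun ε hε => ?_⟩
      obtain ⟨N, hN⟩ := h (ε / (‖A‖ + 1)) (by positivity)
      exact ⟨N, fun n hn => ((hN n hn).mul_left A).mono le_rfl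
        (eps_aux _ _ (norm_nonneg _) hε n)⟩)
    (by
      rintro X A ⟨m, h⟩
      refine ⟨m, fun ε hε => ?_⟩
      obtain ⟨N, hN⟩ := h (ε / (‖A‖ + 1)) (by positivity)
      exact ⟨N, fun n hn => ((hN n hn).mul_right A).mono le_rfl
        (by rw [mul_comm]; exact eps_aux _ _ (norm_nonneg _) hε n)⟩)

theorem compact_appr (Y : ellTwo →L[ℂ] ellTwo) (hY : IsCompactOperator (Y : ellTwo → ellTwo))
    (δ : ℝ) (hδ : 0 < δ) : ∃ r : ℕ, Appr Y r δ := by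
  have hc := IsCompactOperator.isCompact_closure_image_closedBall
    (f := (Y : ellTwo →ₗ[ℂ] ellTwo)) hY 1
  have htb := hc.totallyBounded.subset subset_closure
  obtain ⟨t, ht, hcov⟩ := Metric.totallyBounded_iff.1 htb δ hδ
  have : Fintype t := ht.fintype
  let U : Submodule ℂ ellTwo := Submodule.span ℂ t
  have hfd : FiniteDimensional ℂ U := FiniteDimensional.span_of_finite ℂ ht
  refine ⟨Module.finrank ℂ U, U.starProjection * Y, ?_, ?_⟩
  · rw [Module.finrank_eq_rank]
    refine Submodule.rank_mono ?_
    rintro _ ⟨x, rfl⟩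
    exact Submodule.starProjection_apply_mem U (Y x)
  · refine ContinuousLinearMap.opNorm_le_of_unit_norm hδ.le ?_
    intro x hx
    have hmem : Y x ∈ (Y : ellTwo →ₗ[ℂ] ellTwo) '' Metric.closedBall 0 1 :=
      ⟨x, by simp [hx], rfl⟩
    have := hcov hmem
    simp only [Set.mem_iUnion, Metric.mem_ball] at this
    obtain ⟨y, hy, hd⟩ := this
    have h1 := Submodule.starProjection_minimal (U := U) (Y x)
    have h2 : (⨅ z : U, ‖Y x - z‖) ≤ ‖Y x - y‖ :=
      ciInf_le (f := fun z : U => ‖Y x - z‖) ⟨0, by rintro _ ⟨z, rfl⟩; exact norm_nonneg _⟩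
        ⟨y, Submodule.subset_span hy⟩
    change ‖Y x - U.starProjection (Y x)‖ ≤ δ
    rw [h1]
    rw [dist_eq_norm] at hd
    exact h2.trans hd.le

theorem mul_mem_litO {X Y : ellTwo →L[ℂ] ellTwo} (hX : X ∈ bigO) (hY : Y ∈ compactIdeal) :
    X * Y ∈ litO := by
  obtain ⟨C, hC, m, h⟩ := (TwoSidedIdeal.mem_mk' _ _ _ _ _ _ _).1 hX
  have hY' := (TwoSidedIdeal.mem_mk' _ _ _ _ _ _ _).1 hY
  refine (TwoSidedIdeal.mem_mk' _ _ _ _ _ _ _).2 ⟨m + 1, fun ε hε => ?_⟩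
  obtain ⟨r, hr⟩ := compact_appr Y hY' (ε / (C + 1)) (by positivity)
  refine ⟨r, fun n hn => ((h n).mul (by positivity) hr).mono (by nlinarith) ?_⟩
  have := eps_aux C ε hC hε n
  calc _ = C * (ε / (C + 1) / ((n : ℝ) + 1)) := by ring
    _ ≤ _ := this

theorem eval_eq (j : ℕ) (x : ellTwo) : lp.evalCLM ℂ (fun _ : ℕ => ℂ) 2 j x = x j := rfl

theorem T_coord (T : ellTwo →L[ℂ] ellTwo)
    (hT : ∀ n : ℕ, T (stdBasis n) = ((n : ℂ) + 1)⁻¹ • stdBasis n) (x : ellTwo) (j : ℕ) :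
    T x j = ((j : ℂ) + 1)⁻¹ * x j := by
  have h := lp.hasSum_single (p := 2) (by simp) x
  have h1 := (h.map T T.continuous).map (lp.evalCLM ℂ (fun _ : ℕ => ℂ) 2 j)
    (ContinuousLinearMap.continuous _)
  refine h1.unique ?_
  convert hasSum_single (f := (lp.evalCLM ℂ (fun _ : ℕ => ℂ) 2 j) ∘ T ∘
    fun i => lp.single 2 i (x i)) j ?_ using 1
  · have : lp.single 2 j (x j) = x j • stdBasis j := by
      rw [stdBasis, ← lp.single_smul]; simp
    simp only [Function.comp_apply, this, map_smul, hT]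
    rw [eval_eq]
    simp [stdBasis]
    ring
  · intro i hi
    have : lp.single 2 i (x i) = x i • stdBasis i := by
      rw [stdBasis, ← lp.single_smul]; simp
    simp only [Function.comp_apply, this, map_smul, hT]
    rw [eval_eq]
    simp [stdBasis, hi.symm]

theorem sum_coord {ι : Type*} (s : Finset ι) (c : ι → ℂ) (f : ι → ℕ) (j : ℕ) :
    (∑ i ∈ s, c i • stdBasis (f i) : ellTwo) j = ∑ i ∈ s, if j = f i then c i else 0 := by
  rw [lp.coeFn_sum, Finset.sum_apply]
  refine Finset.sum_congr rfl fun i _ => ?_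
  simp [stdBasis, Pi.single_apply]

theorem T_bigO (T : ellTwo →L[ℂ] ellTwo)
    (hT : ∀ n : ℕ, T (stdBasis n) = ((n : ℂ) + 1)⁻¹ • stdBasis n) : T ∈ bigO := by
  refine (TwoSidedIdeal.mem_mk' _ _ _ _ _ _ _).2 ⟨1, zero_le_one, 1, fun n => ?_⟩
  let P : ellTwo →L[ℂ] ellTwo := ∑ i ∈ Finset.range n,
    (lp.evalCLM ℂ (fun _ : ℕ => ℂ) 2 i).smulRight (stdBasis i)
  have hP : ∀ x, P x = ∑ i ∈ Finset.range n, x i • stdBasis i := by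
    intro x
    simp [P, eval_eq]
  refine ⟨T * P, ?_, ?_⟩
  · refine (LinearMap.rank_comp_le_right (P : ellTwo →ₗ[ℂ] ellTwo)
      (T : ellTwo →ₗ[ℂ] ellTwo)).trans ?_
    classical
    have hle : LinearMap.range (P : ellTwo →ₗ[ℂ] ellTwo) ≤
        Submodule.span ℂ (((Finset.range n).image stdBasis : Finset ellTwo) : Set ellTwo) := by
      rintro _ ⟨x, rfl⟩
      change P x ∈ _
      rw [hP]
      refine Submodule.sum_mem _ fun i hi => Submodule.smul_mem _ _ (Submodule.subset_span ?_)
      exact Finset.mem_coe.2 (Finset.mem_image_of_mem _ hi)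
    refine (Submodule.rank_mono hle).trans ?_
    refine (rank_span_finset_le _).trans ?_
    rw [one_mul]
    exact_mod_cast Finset.card_image_le.trans (Finset.card_range n).le
  · refine ContinuousLinearMap.opNorm_le_bound _ (by positivity) fun x => ?_
    have : ‖(T - T * P) x‖ ≤ ‖((1 / ((n : ℝ) + 1) : ℝ) : ℂ) • x‖ := by
      refine lp.norm_mono (by simp) fun j => ?_
      have e : (T - T * P) x = T (x - P x) := by simp
      rw [e, T_coord T hT, lp.coeFn_sub, Pi.sub_apply, hP, sum_coord, lp.coeFn_smul, Pi.smul_apply,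
        smul_eq_mul, norm_mul, norm_mul]
      rw [Finset.sum_ite_eq]
      by_cases hj : j < n
      · simp [hj]
        positivity
      · simp only [Finset.mem_range, hj, if_false, sub_zero]
        gcongr
        have h1 : ((j : ℂ) + 1)⁻¹ = (((j : ℝ) + 1)⁻¹ : ℝ) := by push_cast; rfl
        rw [h1, Complex.norm_real, Complex.norm_real, Real.norm_of_nonneg (by positivity),
          Real.norm_of_nonneg (by positivity), one_div]
        have : (n : ℝ) ≤ j := by exact_mod_cast not_lt.1 hj
        gcongr
    refine this.trans ?_
    rw [norm_smul, Complex.norm_real, Real.norm_of_nonneg (by positivity)]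

theorem T_lower (T : ellTwo →L[ℂ] ellTwo)
    (hT : ∀ n : ℕ, T (stdBasis n) = ((n : ℂ) + 1)⁻¹ • stdBasis n) (k : ℕ) (c : ℝ)
    (h : Appr T k c) : 1 ≤ ((k : ℝ) + 1) * c := by
  obtain ⟨F, hF, hc⟩ := h
  let g : (Fin (k + 1) → ℂ) →ₗ[ℂ] ellTwo :=
    Fintype.linearCombination ℂ (fun i : Fin (k + 1) => stdBasis i)
  have hg : ∀ v, g v = ∑ i, v i • stdBasis (i : ℕ) := fun v =>
    Fintype.linearCombination_apply _ _ _
  let R := LinearMap.range (F : ellTwo →ₗ[ℂ] ellTwo)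
  have hfd : FiniteDimensional ℂ R :=
    Module.rank_lt_aleph0_iff.1 (hF.trans_lt (Cardinal.natCast_lt_aleph0))
  have hfr : Module.finrank ℂ R ≤ k := by
    have h1 : Module.rank ℂ R ≤ (k : Cardinal) := hF
    rw [← Module.finrank_eq_rank] at h1
    exact_mod_cast h1
  have hker : LinearMap.ker ((F : ellTwo →ₗ[ℂ] ellTwo).rangeRestrict ∘ₗ g) ≠ ⊥ := by
    apply LinearMap.ker_ne_bot_of_finrank_lt
    rw [Module.finrank_fin_fun]
    exact Nat.lt_succ_of_le hfr
  obtain ⟨v, hv, hv0⟩ := (Submodule.ne_bot_iff _).1 hker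
  have hFx : F (g v) = 0 := congrArg Subtype.val hv
  have hx0 : g v ≠ 0 := by
    intro h0
    apply hv0
    funext i
    have h1 : (g v) (i : ℕ) = v i := by
      rw [hg, sum_coord]
      simp [Fin.val_inj]
    rw [← h1, h0]
    rfl
  have hle : ‖g v‖ ≤ ‖((k : ℂ) + 1) • T (g v)‖ := by
    refine lp.norm_mono (by simp) fun j => ?_
    rw [lp.coeFn_smul, Pi.smul_apply, T_coord T hT, smul_eq_mul]
    by_cases hj : j < k + 1
    · rw [← mul_assoc, norm_mul]
      refine le_mul_of_one_le_left (norm_nonneg _) ?_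
      have h1 : ((k : ℂ) + 1) * ((j : ℂ) + 1)⁻¹ = (((k : ℝ) + 1) * ((j : ℝ) + 1)⁻¹ : ℝ) := by
        push_cast; rfl
      rw [h1, Complex.norm_real, Real.norm_of_nonneg (by positivity), ← div_eq_mul_inv,
        one_le_div (by positivity)]
      have : (j : ℝ) ≤ k := by exact_mod_cast Nat.le_of_lt_succ hj
      linarith
    · have h0 : (g v) j = 0 := by
        rw [hg, sum_coord]
        refine Finset.sum_eq_zero fun i _ => if_neg ?_
        have := i.2
        omega
      rw [h0]; simp
  have hTx : ‖T (g v)‖ ≤ c * ‖g v‖ := by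
    have := (T - F).le_of_opNorm_le hc (g v)
    rwa [sub_apply, hFx, sub_zero] at this
  have hk : ‖((k : ℂ) + 1)‖ = (k : ℝ) + 1 := by
    have h1 : ((k : ℂ) + 1) = (((k : ℝ) + 1 : ℝ) : ℂ) := by push_cast; rfl
    rw [h1, Complex.norm_real, Real.norm_of_nonneg (by positivity)]
  rw [norm_smul, hk] at hle
  have hpos : 0 < ‖g v‖ := norm_pos_iff.2 hx0
  have h2 : 1 * ‖g v‖ ≤ (((k : ℝ) + 1) * c) * ‖g v‖ := by
    rw [one_mul, mul_assoc]
    exact hle.trans (by gcongr)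
  exact le_of_mul_le_mul_right h2 hpos

theorem T_not_litO (T : ellTwo →L[ℂ] ellTwo)
    (hT : ∀ n : ℕ, T (stdBasis n) = ((n : ℂ) + 1)⁻¹ • stdBasis n) : T ∉ litO := by
  intro h
  obtain ⟨m, h⟩ := (TwoSidedIdeal.mem_mk' _ _ _ _ _ _ _).1 h
  obtain ⟨N, hN⟩ := h (1 / (2 * ((m : ℝ) + 1))) (by positivity)
  have := T_lower T hT _ _ (hN N le_rfl)
  rw [div_div, mul_one_div, le_div_iff₀ (by positivity)] at this
  push_cast at this
  have hm : (0 : ℝ) ≤ m := by positivity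
  have hn : (0 : ℝ) ≤ N := by positivity
  nlinarith [mul_nonneg hm hn]

/-- The principal two-sided ideal generated by the diagonal operator
`T e_n = (1/(n+1)) e_n` on `ℓ²(ℕ, ℂ)` is not soft-edged: `(T) ≠ (T)·K(ℓ²)`. -/
theorem stmt5 (T : ellTwo →L[ℂ] ellTwo)
    (hT : ∀ n : ℕ, T (stdBasis n) = ((n : ℂ) + 1)⁻¹ • stdBasis n) :
    TwoSidedIdeal.span {T} ≠ idealMul (TwoSidedIdeal.span {T}) compactIdeal := by
  intro h
  have hmem : T ∈ TwoSidedIdeal.span {T} := TwoSidedIdeal.subset_span rfl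
  have hle : TwoSidedIdeal.span {T} ≤ bigO :=
    TwoSidedIdeal.span_le.2 (Set.singleton_subset_iff.2 (T_bigO T hT))
  have hle2 : idealMul (TwoSidedIdeal.span {T}) compactIdeal ≤ litO := by
    refine TwoSidedIdeal.span_le.2 ?_
    rintro _ ⟨a, ha, b, hb, rfl⟩
    exact mul_mem_litO (hle ha) hb
  rw [h] at hmem
  exact T_not_litO T hT (hle2 hmem)
end

section
/- Let ξ : ℕ → ℝ be a nonincreasing sequence of positive real numbers converging to 0 that satisfies the Δ₂-condition: there is a constant M > 0 with ξ(n) ≤ M · ξ(2n) for all n. Let T be the bounded diagonal operator on ℓ²(ℕ, ℂ) defined by T e_n = ξ(n) e_n for the standard orthonormal basis (e_n). Then the principal two-sided ideal (T) of B(ℓ²) generated by T is not soft-edged: (T) ≠ (T)·K(ℓ²). -/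
open Filter

/-- `A` is within `c` of an operator of rank at most `n`. -/
def AppNum (A : ellTwo →L[ℂ] ellTwo) (n : ℕ) (c : ℝ) : Prop :=
  ∃ F : ellTwo →L[ℂ] ellTwo, LinearMap.rank (F : ellTwo →ₗ[ℂ] ellTwo) ≤ (n : Cardinal) ∧ ‖A - F‖ ≤ c

lemma AppNum.mono {A : ellTwo →L[ℂ] ellTwo} {n m : ℕ} {c d : ℝ} (h : AppNum A n c)
    (hn : n ≤ m) (hc : c ≤ d) : AppNum A m d := by
  obtain ⟨F, h1, h2⟩ := h
  exact ⟨F, h1.trans (by exact_mod_cast hn), h2.trans hc⟩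

lemma AppNum.zero {n : ℕ} {c : ℝ} (hc : 0 ≤ c) : AppNum 0 n c :=
  ⟨0, by simp, by simpa using hc⟩

lemma AppNum.add {A B : ellTwo →L[ℂ] ellTwo} {n m : ℕ} {c d : ℝ} (h : AppNum A n c)
    (h' : AppNum B m d) : AppNum (A + B) (n + m) (c + d) := by
  obtain ⟨F, h1, h2⟩ := h
  obtain ⟨G, g1, g2⟩ := h'
  refine ⟨F + G, ?_, ?_⟩
  · push_cast
    exact (LinearMap.rank_add_le _ _).trans (add_le_add h1 g1)
  · rw [add_sub_add_comm]
    exact (norm_add_le _ _).trans (add_le_add h2 g2)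

lemma clm_rank_mul_right (X F : ellTwo →L[ℂ] ellTwo) :
    LinearMap.rank ((X * F : ellTwo →L[ℂ] ellTwo) : ellTwo →ₗ[ℂ] ellTwo) ≤
      LinearMap.rank (F : ellTwo →ₗ[ℂ] ellTwo) := by
  have h : ((X * F : ellTwo →L[ℂ] ellTwo) : ellTwo →ₗ[ℂ] ellTwo) =
    (X : ellTwo →ₗ[ℂ] ellTwo).comp (F : ellTwo →ₗ[ℂ] ellTwo) := rfl
  rw [h]
  exact LinearMap.rank_comp_le_right _ _

lemma clm_rank_mul_left (F X : ellTwo →L[ℂ] ellTwo) :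
    LinearMap.rank ((F * X : ellTwo →L[ℂ] ellTwo) : ellTwo →ₗ[ℂ] ellTwo) ≤
      LinearMap.rank (F : ellTwo →ₗ[ℂ] ellTwo) := by
  have h : ((F * X : ellTwo →L[ℂ] ellTwo) : ellTwo →ₗ[ℂ] ellTwo) =
    (F : ellTwo →ₗ[ℂ] ellTwo).comp (X : ellTwo →ₗ[ℂ] ellTwo) := rfl
  rw [h]
  exact LinearMap.rank_comp_le_left _ _

lemma AppNum.left {A : ellTwo →L[ℂ] ellTwo} {n : ℕ} {c : ℝ} (h : AppNum A n c)
    (X : ellTwo →L[ℂ] ellTwo) : AppNum (X * A) n (‖X‖ * c) := by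
  obtain ⟨F, h1, h2⟩ := h
  refine ⟨X * F, (clm_rank_mul_right X F).trans h1, ?_⟩
  rw [← mul_sub]
  exact (norm_mul_le _ _).trans (mul_le_mul_of_nonneg_left h2 (norm_nonneg X))

lemma AppNum.right {A : ellTwo →L[ℂ] ellTwo} {n : ℕ} {c : ℝ} (h : AppNum A n c)
    (X : ellTwo →L[ℂ] ellTwo) : AppNum (A * X) n (‖X‖ * c) := by
  obtain ⟨F, h1, h2⟩ := h
  refine ⟨F * X, (clm_rank_mul_left F X).trans h1, ?_⟩
  rw [← sub_mul, mul_comm ‖X‖]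
  exact (norm_mul_le _ _).trans (mul_le_mul_of_nonneg_right h2 (norm_nonneg X))

lemma AppNum.neg {A : ellTwo →L[ℂ] ellTwo} {n : ℕ} {c : ℝ} (h : AppNum A n c) :
    AppNum (-A) n c := by
  obtain ⟨F, h1, h2⟩ := h
  refine ⟨-F, ?_, ?_⟩
  · have : ((-F : ellTwo →L[ℂ] ellTwo) : ellTwo →ₗ[ℂ] ellTwo) = -(F : ellTwo →ₗ[ℂ] ellTwo) := rfl
    rw [this, LinearMap.rank, LinearMap.range_neg]
    exact h1
  · rw [← norm_neg]
    simpa [sub_eq_add_neg, add_comm] using h2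

lemma AppNum.mul {A B : ellTwo →L[ℂ] ellTwo} {n m : ℕ} {c d : ℝ} (h : AppNum A n c)
    (h' : AppNum B m d) : AppNum (A * B) (n + m) (c * d) := by
  obtain ⟨F, h1, h2⟩ := h
  obtain ⟨G, g1, g2⟩ := h'
  refine ⟨F * B + (A - F) * G, ?_, ?_⟩
  · push_cast
    refine (LinearMap.rank_add_le _ _).trans (add_le_add ?_ ?_)
    · exact (clm_rank_mul_left F B).trans h1
    · exact (clm_rank_mul_right (A - F) G).trans g1
  · have : A * B - (F * B + (A - F) * G) = (A - F) * (B - G) := by noncomm_ring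
    rw [this]
    exact (norm_mul_le _ _).trans (mul_le_mul h2 g2 (norm_nonneg _) ((norm_nonneg _).trans h2))

/-- Compact operators are norm limits of finite rank operators. -/
lemma compact_appNum {K : ellTwo →L[ℂ] ellTwo} (hK : IsCompactOperator (K : ellTwo → ellTwo))
    {ε : ℝ} (hε : 0 < ε) : ∃ r : ℕ, AppNum K r ε := by
  have hc : IsCompact (closure (K '' Metric.closedBall 0 1)) :=
    IsCompactOperator.isCompact_closure_image_closedBall (f := (K : ellTwo →ₗ[ℂ] ellTwo)) hK 1
  have htb := hc.totallyBounded
  obtain ⟨t, htf, ht⟩ := Metric.totallyBounded_iff.1 htb ε hε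
  have hfd : FiniteDimensional ℂ (Submodule.span ℂ t) := FiniteDimensional.span_of_finite ℂ htf
  let V := Submodule.span ℂ t
  refine ⟨Module.finrank ℂ V, V.starProjection * K, ?_, ?_⟩
  · refine (clm_rank_mul_left V.starProjection K).trans ?_
    rw [LinearMap.rank, Module.finrank_eq_rank]
    refine Submodule.rank_mono ?_
    rintro _ ⟨x, rfl⟩
    exact V.starProjection_apply_mem x
  · refine ContinuousLinearMap.opNorm_le_of_unit_norm (𝕜 := ℂ) hε.le ?_
    intro x hx
    have hmem : K x ∈ closure (K '' Metric.closedBall 0 1) :=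
      subset_closure ⟨x, by simp [hx], rfl⟩
    obtain ⟨y, hy, hxy⟩ := Set.mem_iUnion₂.1 (ht hmem)
    have h1 : ‖K x - V.starProjection (K x)‖ = ⨅ w : V, ‖K x - w‖ :=
      Submodule.starProjection_minimal (U := V) (K x)
    have h2 : (⨅ w : V, ‖K x - w‖) ≤ ‖K x - y‖ :=
      ciInf_le (f := fun w : V => ‖K x - w‖) ⟨0, by rintro _ ⟨w, rfl⟩; exact norm_nonneg _⟩
        (⟨y, Submodule.subset_span hy⟩ : V)
    have h3 : ‖K x - y‖ < ε := by simpa [dist_eq_norm] using hxy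
    change ‖K x - V.starProjection (K x)‖ ≤ ε
    linarith

lemma ellTwo_norm_le {x y : ellTwo} {C : ℝ} (hC : 0 ≤ C) (h : ∀ k, ‖y k‖ ≤ C * ‖x k‖) :
    ‖y‖ ≤ C * ‖x‖ := by
  have : ‖y‖ ≤ ‖(C : ℂ) • x‖ := by
    refine lp.norm_mono (by norm_num) ?_
    intro k
    rw [lp.coeFn_smul, Pi.smul_apply, norm_smul, Complex.norm_real, Real.norm_of_nonneg hC]
    exact h k
  rwa [norm_smul, Complex.norm_real, Real.norm_of_nonneg hC] at this

lemma smul_stdBasis_apply (a : ℂ) (i k : ℕ) :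
    ((a • stdBasis i : ellTwo) : ℕ → ℂ) k = if i = k then a else 0 := by
  rw [lp.coeFn_smul, Pi.smul_apply, stdBasis, lp.single_apply, Pi.single_apply, smul_eq_mul]
  by_cases h : i = k
  · simp [h]
  · simp [h, Ne.symm h]

lemma diag_apply {ξ : ℕ → ℝ} {T : ellTwo →L[ℂ] ellTwo}
    (hT : ∀ n : ℕ, T (stdBasis n) = (ξ n : ℂ) • stdBasis n) (x : ellTwo) (k : ℕ) :
    (T x) k = ξ k * x k := by
  have h := lp.hasSum_single (p := 2) (by norm_num) x
  have h2 := (h.mapL T).mapL (lp.evalCLM ℂ (fun _ : ℕ => ℂ) 2 k)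
  have h3 : ∀ i, T (lp.single 2 i (x i)) = (x i * ξ i) • stdBasis i := by
    intro i
    have : lp.single 2 i (x i) = x i • stdBasis i := by
      rw [stdBasis, ← lp.single_smul]; simp
    rw [this, map_smul, hT, smul_smul]
  have h4 : ∀ i, lp.evalCLM ℂ (fun _ : ℕ => ℂ) 2 k (T (lp.single 2 i (x i))) =
      if i = k then ξ k * x k else 0 := by
    intro i
    rw [h3]
    change (((x i * ξ i) • stdBasis i : ellTwo) : ℕ → ℂ) k = _
    rw [smul_stdBasis_apply]
    split_ifs with h
    · rw [h, mul_comm]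
    · rfl
  have h5 := h2.tsum_eq
  simp only [h4] at h5
  rw [tsum_ite_eq] at h5
  exact h5.symm

lemma diag_appNum {ξ : ℕ → ℝ} (hpos : ∀ n, 0 < ξ n) (hanti : Antitone ξ)
    {T : ellTwo →L[ℂ] ellTwo}
    (hT : ∀ n : ℕ, T (stdBasis n) = (ξ n : ℂ) • stdBasis n) (n : ℕ) :
    AppNum T n (ξ n) := by
  classical
  let F : ellTwo →L[ℂ] ellTwo := ∑ i ∈ Finset.range n,
    ((lp.evalCLM ℂ (fun _ : ℕ => ℂ) 2 i).smulRight ((ξ i : ℂ) • stdBasis i))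
  have hF : ∀ x, F x = ∑ i ∈ Finset.range n, x i • ((ξ i : ℂ) • stdBasis i) := by
    intro x
    simp only [F, _root_.sum_apply]
    rfl
  refine ⟨F, ?_, ?_⟩
  · have h1 : LinearMap.range (F : ellTwo →ₗ[ℂ] ellTwo) ≤
        Submodule.span ℂ (((Finset.range n).image stdBasis : Finset ellTwo) : Set ellTwo) := by
      rintro _ ⟨x, rfl⟩
      change F x ∈ _
      rw [hF]
      refine Submodule.sum_mem _ fun i hi => Submodule.smul_mem _ _ (Submodule.smul_mem _ _
        (Submodule.subset_span ?_))
      exact Finset.mem_coe.2 (Finset.mem_image_of_mem _ hi)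
    refine (Submodule.rank_mono h1).trans ((rank_span_finset_le _).trans ?_)
    exact_mod_cast Finset.card_image_le.trans (by simp)
  · refine ContinuousLinearMap.opNorm_le_bound _ (hpos n).le fun x => ?_
    refine ellTwo_norm_le (hpos n).le fun k => ?_
    have h5 : (F x) k = if k < n then ξ k * x k else 0 := by
      rw [hF, lp.coeFn_sum, Finset.sum_apply]
      simp only [smul_smul, smul_stdBasis_apply]
      simp [mul_comm]
    have h6 : ((T - F) x) k = if k < n then 0 else ξ k * x k := by
      change (T x) k - (F x) k = _
      rw [h5, diag_apply hT]
      split_ifs <;> simp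
    rw [h6]
    split_ifs with hk
    · simpa using mul_nonneg (hpos n).le (norm_nonneg _)
    · rw [norm_mul, Complex.norm_real, Real.norm_of_nonneg (hpos k).le]
      exact mul_le_mul_of_nonneg_right (hanti (not_lt.1 hk)) (norm_nonneg _)

lemma diag_not_appNum {ξ : ℕ → ℝ} (hpos : ∀ n, 0 < ξ n) (hanti : Antitone ξ)
    {T : ellTwo →L[ℂ] ellTwo}
    (hT : ∀ n : ℕ, T (stdBasis n) = (ξ n : ℂ) • stdBasis n) (n : ℕ) :
    ¬ AppNum T n (1 / 2 * ξ n) := by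
  rintro ⟨F, h1, h2⟩
  let E : (Fin (n + 1) → ℂ) →ₗ[ℂ] ellTwo :=
    Fintype.linearCombination ℂ (fun i : Fin (n + 1) => stdBasis i)
  have hE : ∀ c k, (E c) k = if h : k < n + 1 then c ⟨k, h⟩ else 0 := by
    intro c k
    rw [Fintype.linearCombination_apply, lp.coeFn_sum, Finset.sum_apply]
    have : ∀ i : Fin (n + 1), (c i • stdBasis i : ellTwo) k = if (i : ℕ) = k then c i else 0 := by
      intro i
      exact smul_stdBasis_apply _ _ _
    simp only [this]
    split_ifs with h
    · rw [Finset.sum_eq_single ⟨k, h⟩]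
      · simp
      · intro b _ hb
        rw [if_neg]
        intro h'
        exact hb (Fin.ext h')
      · simp
    · refine Finset.sum_eq_zero fun i _ => if_neg ?_
      have := i.2
      omega
  have hni : ¬ Function.Injective ((F : ellTwo →ₗ[ℂ] ellTwo).comp E) := by
    intro hinj
    have h3 := LinearMap.rank_comp_le_left E (F : ellTwo →ₗ[ℂ] ellTwo)
    have h4 := rank_range_of_injective _ hinj
    have h5 := h3.trans h1
    rw [LinearMap.rank, h4] at h5
    simp only [rank_fun', Fintype.card_fin] at h5
    have h6 : n + 1 ≤ n := by exact_mod_cast h5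
    omega
  rw [← LinearMap.ker_eq_bot, Submodule.eq_bot_iff] at hni
  push Not at hni
  obtain ⟨c, hc, hc0⟩ := hni
  have hFx : F (E c) = 0 := hc
  have hx0 : E c ≠ 0 := by
    intro h0
    apply hc0
    funext i
    have := hE c i
    rw [h0] at this
    rw [dif_pos i.2] at this
    exact this.symm
  have hlow : ‖E c‖ ≤ (ξ n)⁻¹ * ‖T (E c)‖ := by
    refine ellTwo_norm_le (inv_nonneg.2 (hpos n).le) fun k => ?_
    rw [diag_apply hT, hE]
    split_ifs with h
    · rw [norm_mul, Complex.norm_real, Real.norm_of_nonneg (hpos k).le, ← mul_assoc]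
      have h7 : ξ n ≤ ξ k := hanti (by omega)
      have h8 : 1 ≤ (ξ n)⁻¹ * ξ k := by
        rw [inv_mul_eq_div, one_le_div (hpos n)]; exact h7
      nlinarith [norm_nonneg (c ⟨k, h⟩)]
    · simp
  have hup : ‖T (E c)‖ ≤ 1 / 2 * ξ n * ‖E c‖ := by
    have := (T - F).le_of_opNorm_le h2 (E c)
    simpa [hFx] using this
  have hp : 0 < ‖E c‖ := norm_pos_iff.2 hx0
  have h9 : ξ n * ‖E c‖ ≤ ‖T (E c)‖ := by
    rw [inv_mul_eq_div, le_div_iff₀ (hpos n)] at hlow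
    linarith
  nlinarith [mul_pos (hpos n) hp]

lemma delta_half {ξ : ℕ → ℝ} (hpos : ∀ n, 0 < ξ n) (hanti : Antitone ξ)
    (hΔ₂ : ∃ M : ℝ, 0 < M ∧ ∀ n, ξ n ≤ M * ξ (2 * n)) :
    ∃ L : ℝ, 0 < L ∧ ∀ n, ξ (n / 2) ≤ L * ξ n := by
  obtain ⟨M, hM, h⟩ := hΔ₂
  refine ⟨M * M + ξ 0 / ξ 1, by have := hpos 0; have := hpos 1; positivity, fun n => ?_⟩
  have hq : 0 < ξ 0 / ξ 1 := div_pos (hpos 0) (hpos 1)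
  by_cases hn : n < 2
  · have h1 : n / 2 = 0 := by omega
    have h2 : ξ 1 ≤ ξ n := hanti (by omega)
    have h3 : ξ 0 / ξ 1 * ξ 1 = ξ 0 := div_mul_cancel₀ _ (hpos 1).ne'
    have h4 := hpos n
    rw [h1]
    nlinarith [mul_le_mul_of_nonneg_left h2 hq.le, mul_pos (mul_pos hM hM) h4]
  · have h1 := h (n / 2)
    have h2 := h (2 * (n / 2))
    have h3 : ξ (2 * (2 * (n / 2))) ≤ ξ n := hanti (by omega)
    have h4 := mul_le_mul_of_nonneg_left (h2.trans (mul_le_mul_of_nonneg_left h3 hM.le)) hM.le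
    nlinarith [mul_pos hq (hpos n)]

lemma span_appNum {ξ : ℕ → ℝ} (hpos : ∀ n, 0 < ξ n) (hanti : Antitone ξ)
    {L : ℝ} (hL : 0 < L) (hd : ∀ n, ξ (n / 2) ≤ L * ξ n)
    {T : ellTwo →L[ℂ] ellTwo}
    (hT : ∀ n : ℕ, T (stdBasis n) = (ξ n : ℂ) • stdBasis n) {A : ellTwo →L[ℂ] ellTwo}
    (hA : A ∈ TwoSidedIdeal.span {T}) : ∃ C : ℝ, 0 ≤ C ∧ ∀ n, AppNum A n (C * ξ n) := by
  induction hA using TwoSidedIdeal.span_induction with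
  | mem x hx =>
    rw [Set.mem_singleton_iff] at hx
    subst hx
    exact ⟨1, zero_le_one, fun n => by simpa using diag_appNum hpos hanti hT n⟩
  | zero => exact ⟨0, le_rfl, fun n => AppNum.zero (by simp)⟩
  | add x y _ _ hx hy =>
    obtain ⟨C, hC, h1⟩ := hx
    obtain ⟨D, hD, h2⟩ := hy
    refine ⟨(C + D) * L, by positivity, fun n => ?_⟩
    refine ((h1 (n / 2)).add (h2 (n / 2))).mono (by omega) ?_
    nlinarith [mul_le_mul_of_nonneg_left (hd n) (add_nonneg hC hD)]
  | neg x _ hx =>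
    obtain ⟨C, hC, h1⟩ := hx
    exact ⟨C, hC, fun n => (h1 n).neg⟩
  | left_absorb a x _ hx =>
    obtain ⟨C, hC, h1⟩ := hx
    exact ⟨‖a‖ * C, by positivity, fun n => by simpa [mul_assoc] using (h1 n).left a⟩
  | right_absorb a x _ hx =>
    obtain ⟨C, hC, h1⟩ := hx
    exact ⟨‖a‖ * C, by positivity, fun n => by simpa [mul_assoc] using (h1 n).right a⟩

lemma soft_appNum {ξ : ℕ → ℝ} (hpos : ∀ n, 0 < ξ n) (hanti : Antitone ξ)
    {L : ℝ} (hL : 0 < L) (hd : ∀ n, ξ (n / 2) ≤ L * ξ n)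
    {T : ellTwo →L[ℂ] ellTwo}
    (hT : ∀ n : ℕ, T (stdBasis n) = (ξ n : ℂ) • stdBasis n) {A : ellTwo →L[ℂ] ellTwo}
    (hA : A ∈ idealMul (TwoSidedIdeal.span {T}) compactIdeal) :
    ∀ ε : ℝ, 0 < ε → ∃ N : ℕ, ∀ n, N ≤ n → AppNum A n (ε * ξ n) := by
  unfold idealMul at hA
  induction hA using TwoSidedIdeal.span_induction with
  | mem x hx =>
    obtain ⟨a, ha, b, hb, rfl⟩ := hx
    obtain ⟨C, hC, h1⟩ := span_appNum hpos hanti hL hd hT ha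
    have hb' : IsCompactOperator (b : ellTwo → ellTwo) := by
      simpa [compactIdeal] using hb
    intro ε hε
    obtain ⟨r, hr⟩ := compact_appNum hb' (ε := ε / ((C + 1) * L)) (by positivity)
    refine ⟨2 * r, fun n hn => ((h1 (n / 2)).mul hr).mono (by omega) ?_⟩
    have h2 : C * ξ (n / 2) ≤ (C + 1) * (L * ξ n) :=
      mul_le_mul (by linarith) (hd n) (hpos _).le (by linarith)
    calc C * ξ (n / 2) * (ε / ((C + 1) * L))
        ≤ (C + 1) * (L * ξ n) * (ε / ((C + 1) * L)) := by gcongr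
      _ = ε * ξ n := by
        have : C + 1 ≠ 0 := by positivity
        field_simp
  | zero => exact fun ε hε => ⟨0, fun n _ => AppNum.zero (mul_pos hε (hpos n)).le⟩
  | add x y _ _ hx hy =>
    intro ε hε
    obtain ⟨N, h1⟩ := hx (ε / (2 * L)) (by positivity)
    obtain ⟨N', h2⟩ := hy (ε / (2 * L)) (by positivity)
    refine ⟨2 * (N + N'), fun n hn => ?_⟩
    refine ((h1 (n / 2) (by omega)).add (h2 (n / 2) (by omega))).mono (by omega) ?_
    calc _ = ε / L * ξ (n / 2) := by field_simp; ring
      _ ≤ ε / L * (L * ξ n) := by gcongr; exact hd n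
      _ = ε * ξ n := by field_simp
  | neg x _ hx =>
    intro ε hε
    obtain ⟨N, h1⟩ := hx ε hε
    exact ⟨N, fun n hn => (h1 n hn).neg⟩
  | left_absorb a x _ hx =>
    intro ε hε
    obtain ⟨N, h1⟩ := hx (ε / (‖a‖ + 1)) (by positivity)
    refine ⟨N, fun n hn => ((h1 n hn).left a).mono le_rfl ?_⟩
    have := (hpos n).le
    calc _ ≤ (‖a‖ + 1) * (ε / (‖a‖ + 1) * ξ n) := by gcongr; linarith
      _ = _ := by field_simp
  | right_absorb a x _ hx =>
    intro ε hε
    obtain ⟨N, h1⟩ := hx (ε / (‖a‖ + 1)) (by positivity)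
    refine ⟨N, fun n hn => ((h1 n hn).right a).mono le_rfl ?_⟩
    have := (hpos n).le
    calc _ ≤ (‖a‖ + 1) * (ε / (‖a‖ + 1) * ξ n) := by gcongr; linarith
      _ = _ := by field_simp

/-- Let `ξ : ℕ → ℝ` be a nonincreasing sequence of positive reals tending to `0`
satisfying the `Δ₂`-condition (`ξ n ≤ M · ξ (2n)` for some `M > 0`).  Then the principal
two-sided ideal generated by the diagonal operator `T e_n = ξ n • e_n` on `ℓ²(ℕ, ℂ)` is
not soft-edged: `(T) ≠ (T)·K(ℓ²)`. -/
theorem stmt6 (ξ : ℕ → ℝ) (hpos : ∀ n, 0 < ξ n) (hanti : Antitone ξ)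
    (hlim : Tendsto ξ atTop (nhds 0))
    (hΔ₂ : ∃ M : ℝ, 0 < M ∧ ∀ n, ξ n ≤ M * ξ (2 * n))
    (T : ellTwo →L[ℂ] ellTwo)
    (hT : ∀ n : ℕ, T (stdBasis n) = (ξ n : ℂ) • stdBasis n) :
    TwoSidedIdeal.span {T} ≠ idealMul (TwoSidedIdeal.span {T}) compactIdeal := by
  obtain ⟨L, hL, hd⟩ := delta_half hpos hanti hΔ₂
  intro heq
  have hmem : T ∈ TwoSidedIdeal.span {T} := TwoSidedIdeal.subset_span (Set.mem_singleton T)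
  rw [heq] at hmem
  obtain ⟨N, h⟩ := soft_appNum hpos hanti hL hd hT hmem (1 / 2) (by norm_num)
  exact diag_not_appNum hpos hanti hT N (h N le_rfl)
end

section
/- Let T be the bounded diagonal operator on ℓ²(ℕ, ℂ) defined by T e_n = 2^{-n} e_n for the standard orthonormal basis (e_n)_{n ∈ ℕ}. Then the principal two-sided ideal (T) of B(ℓ²) generated by T is soft-edged: (T) = (T)·K(ℓ²). -/
lemma ellTwo_clm_ext {A B : ellTwo →L[ℂ] ellTwo}
    (h : ∀ n, A (stdBasis n) = B (stdBasis n)) : A = B := by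
  refine lp.ext_continuousLinearMap (ENNReal.ofNat_ne_top (n := nat_lit 2)) fun i => ?_
  apply ContinuousLinearMap.ext_ring
  exact h i

lemma inner_stdBasis (m : ℕ) (x : ellTwo) : inner ℂ (stdBasis m) x = x m := by
  unfold stdBasis
  rw [lp.inner_single_left]
  simp

lemma stdBasis_orthonormal : Orthonormal ℂ stdBasis := by
  rw [orthonormal_iff_ite]
  intro i j
  rw [inner_stdBasis]
  unfold stdBasis
  rw [lp.coeFn_single, Pi.single_apply]

/-- Isometry sending `e_k` to `e_{f k}`, together with its adjoint. -/
lemma exists_shift (f : ℕ → ℕ) (hf : Function.Injective f) :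
    ∃ V W : ellTwo →L[ℂ] ellTwo, (∀ k, V (stdBasis k) = stdBasis (f k)) ∧
      (∀ k, W (stdBasis (f k)) = stdBasis k) ∧
      (∀ m, m ∉ Set.range f → W (stdBasis m) = 0) := by
  have ho : Orthonormal ℂ (stdBasis ∘ f) := stdBasis_orthonormal.comp f hf
  let V : ellTwo →ₗᵢ[ℂ] ellTwo := ho.orthogonalFamily.linearIsometry
  have hV : ∀ k, V (stdBasis k) = stdBasis (f k) := by
    intro k
    refine (ho.orthogonalFamily.linearIsometry_apply_single (i := k) (1 : ℂ)).trans ?_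
    simp
  have key : ∀ m k, (ContinuousLinearMap.adjoint V.toContinuousLinearMap (stdBasis m)) k
      = inner ℂ (stdBasis (f k)) (stdBasis m) := by
    intro m k
    rw [← inner_stdBasis, ContinuousLinearMap.adjoint_inner_right]
    simp [hV]
  refine ⟨V.toContinuousLinearMap, ContinuousLinearMap.adjoint V.toContinuousLinearMap,
    hV, ?_, ?_⟩
  · intro k
    apply lp.ext
    funext j
    rw [key, ← inner_stdBasis, orthonormal_iff_ite.1 stdBasis_orthonormal,
      orthonormal_iff_ite.1 stdBasis_orthonormal]
    simp [hf.eq_iff]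
  · intro m hm
    apply lp.ext
    funext j
    rw [key, orthonormal_iff_ite.1 stdBasis_orthonormal, if_neg (fun h => hm ⟨j, h⟩)]
    rfl

lemma diag_compact (T : ellTwo →L[ℂ] ellTwo)
    (hT : ∀ n : ℕ, T (stdBasis n) = ((2 : ℂ) ^ n)⁻¹ • stdBasis n) :
    IsCompactOperator (T : ellTwo → ellTwo) := by
  let R : ℕ → (ellTwo →L[ℂ] ellTwo) := fun n =>
    ((2 : ℂ) ^ n)⁻¹ • InnerProductSpace.rankOne ℂ (stdBasis n) (stdBasis n)
  have hR : ∀ n, IsCompactOperator (R n : ellTwo → ellTwo) := by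
    intro n
    have h1 : IsCompactOperator (innerSL ℂ (stdBasis n) : ellTwo → ℂ) :=
      isCompactOperator_of_locallyCompactSpace_dom _
    have h2 := (h1.clm_comp (ContinuousLinearMap.toSpanSingleton ℂ (stdBasis n))).smul
      ((2 : ℂ) ^ n)⁻¹
    exact h2
  have hsum : Summable R := by
    refine Summable.of_norm_bounded (g := fun n => (1/2 : ℝ)^n) summable_geometric_two ?_
    intro n
    have := stdBasis_orthonormal.1 n
    simp [R, norm_smul, this]
  have hTR : T = ∑' n, R n := by
    apply ellTwo_clm_ext
    intro m
    have h := (ContinuousLinearMap.apply ℂ ellTwo (stdBasis m)).hasSum hsum.hasSum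
    refine HasSum.unique ?_ h
    rw [hT]
    have h3 := hasSum_ite_eq m (((2 : ℂ) ^ m)⁻¹ • stdBasis m)
    convert h3 using 2 with n
    simp [R, orthonormal_iff_ite.1 stdBasis_orthonormal]
    split_ifs with h <;> simp_all
  have hc : HasSum R T := hTR ▸ hsum.hasSum
  refine isCompactOperator_of_tendsto hc (Filter.Eventually.of_forall fun s => ?_)
  exact (compactOperator (RingHom.id ℂ) ellTwo ellTwo).sum_mem (fun i _ => hR i)

/-- The principal two-sided ideal generated by the diagonal operator
`T e_n = 2^{-n} e_n` on `ℓ²(ℕ, ℂ)` is soft-edged: `(T) = (T)·K(ℓ²)`. -/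
theorem stmt7 (T : ellTwo →L[ℂ] ellTwo)
    (hT : ∀ n : ℕ, T (stdBasis n) = ((2 : ℂ) ^ n)⁻¹ • stdBasis n) :
    TwoSidedIdeal.span {T} = idealMul (TwoSidedIdeal.span {T}) compactIdeal := by
  have hTm : T ∈ TwoSidedIdeal.span {T} := TwoSidedIdeal.subset_span rfl
  apply le_antisymm
  · rw [TwoSidedIdeal.span_le]
    intro x hx
    rw [Set.mem_singleton_iff.1 hx]
    have hTT : T * T ∈ idealMul (TwoSidedIdeal.span {T}) compactIdeal := by
      apply TwoSidedIdeal.subset_span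
      refine ⟨T, hTm, T, ?_, rfl⟩
      unfold compactIdeal
      rw [TwoSidedIdeal.mem_mk']
      exact diag_compact T hT
    obtain ⟨V, W, hV, hW, hW0⟩ := exists_shift (fun k => 2 * k) (fun a b h => by simpa using h)
    obtain ⟨V', W', hV', hW', hW0'⟩ :=
      exists_shift (fun k => 2 * k + 1) (fun a b h => by simpa using h)
    have e : T = V * (T * T) * W + (((2 : ℂ)⁻¹) • V') * (T * T) * W' := by
      apply ellTwo_clm_ext
      intro n
      rcases Nat.even_or_odd' n with ⟨k, rfl | rfl⟩
      · have h1 := hW k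
        have h2 := hW0' (2 * k) (by rintro ⟨j, hj⟩; simp only at hj; omega)
        simp [h1, h2, hT, hV, smul_smul, pow_mul', pow_two]
      · have h1 := hW' k
        have h2 := hW0 (2 * k + 1) (by rintro ⟨j, hj⟩; simp only at hj; omega)
        simp [h1, h2, hT, hV', smul_smul, pow_succ, pow_mul']
    have hmem := TwoSidedIdeal.add_mem _
      (TwoSidedIdeal.mul_mem_right _ _ W (TwoSidedIdeal.mul_mem_left _ V _ hTT))
      (TwoSidedIdeal.mul_mem_right _ _ W' (TwoSidedIdeal.mul_mem_left _ ((2 : ℂ)⁻¹ • V') _ hTT))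
    rw [← e] at hmem
    exact hmem
  · unfold idealMul
    rw [TwoSidedIdeal.span_le]
    rintro _ ⟨a, ha, b, _, rfl⟩
    exact TwoSidedIdeal.mul_mem_right _ _ _ ha
end
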